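/- Let T be a tree with v vertices, each edge having length 1, let d denote the graph distance, and let W(T) be its Wiener index. Then 8\,W(T) = 2(2v-1)(v-1) + \sum_{p,q \in V(T)} \deg(p)\,\deg(q)\, d(p,q), where the sum runs over all ordered pairs of vertices. -/

import Mathlib

/-!
The distance matrix `D` of a tree on `v` vertices, its degree vector `δ` and the all-ones vector
`1` satisfy `D δ + (v - 1) 1 = 2 D 1`. Indeed, root the tree at `q`: every `p ≠ q` has a unique
parent, i.e. a unique neighbour closer to `q` (`existsUnique_adj_dist_eq_add_one`), and each edge
joins a vertex `p` to its parent, contributing `d(p,q) + (d(p,q) - 1)` to `∑ deg(p) d(p,q)`; summing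
over the `v - 1` edges gives `sum_degree_mul_dist_add`. Pairing the identity with `δ`, and using it
once more together with `∑ deg = 2(v - 1)`, yields
`δᵀ D δ = 2 δᵀ D 1 - 2(v - 1)² = 4 · 1ᵀ D 1 - 2 v (v - 1) - 2(v - 1)²`, and `1ᵀ D 1 = 2 W`.
-/

/-- The Wiener index of a graph: half the sum of all pairwise graph distances. -/
noncomputable def wienerIndex {V : Type*} [Fintype V] (G : SimpleGraph V) : ℕ :=
  (∑ p : V, ∑ q : V, G.dist p q) / 2

/-- In a tree rooted at `q`, every vertex other than the root has exactly one parent. -/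
theorem existsUnique_adj_dist_eq_add_one {V : Type*} {G : SimpleGraph V} (hT : G.IsTree)
    {q p : V} (hne : p ≠ q) : ∃! r, G.Adj p r ∧ G.dist q p = G.dist q r + 1 := by
  obtain ⟨w, hw, hl⟩ := hT.connected.exists_path_of_dist q p
  have hnil : ¬ w.Nil := SimpleGraph.Walk.not_nil_of_ne hne.symm
  have hadj : G.Adj w.penultimate p := w.adj_penultimate hnil
  refine ⟨w.penultimate, ⟨hadj.symm, ?_⟩, ?_⟩
  · have h1 := SimpleGraph.dist_le w.dropLast
    have h2 : w.dropLast.length + 1 = w.length := by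
      simpa using SimpleGraph.Walk.length_dropLast_add_one hnil
    rcases hT.dist_eq_dist_add_one_of_adj q hadj with h | h <;> omega
  · rintro r ⟨har, hr⟩
    -- A geodesic from `q` to `r` followed by the edge `rp` is a geodesic, so it is the path `w`.
    obtain ⟨x, hx, hxl⟩ := hT.connected.exists_path_of_dist q r
    have hc : (x.concat har.symm).IsPath := by
      apply SimpleGraph.Walk.isPath_of_length_eq_dist
      rw [SimpleGraph.Walk.length_concat]
      omega
    have he := (hT.existsUnique_path q p).unique hc hw
    rw [← he, SimpleGraph.Walk.penultimate_concat]

open Classical in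
/-- The `q`-th row of `D δ + (v - 1) 1 = 2 D 1`. -/
theorem sum_degree_mul_dist_add {V : Type*} [Fintype V]
    (G : SimpleGraph V) [DecidableRel G.Adj] (hT : G.IsTree) (q : V) :
    ∑ p : V, G.degree p * G.dist q p + (Fintype.card V - 1) = 2 * ∑ p : V, G.dist q p := by
  -- `P p r` says that `r` is the parent of `p`.
  set P : V → V → Prop := fun p r => G.Adj p r ∧ G.dist q p = G.dist q r + 1 with hP
  have hparent : ∀ (p : V) (c : ℕ), (∑ r : V, if P p r then c else 0) = if p = q then 0 else c := by
    intro p c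
    split_ifs with h
    · subst h
      simp [hP]
    · obtain ⟨r, hr, hu⟩ := existsUnique_adj_dist_eq_add_one hT h
      rw [Finset.sum_eq_single r]
      · exact if_pos hr
      · intro b _ hb
        exact if_neg fun hb' => hb (hu b hb')
      · simp
  have hsplit : ∀ p r : V, (if G.Adj p r then G.dist q p else 0) =
      (if P p r then G.dist q p else 0) + (if P r p then G.dist q r - 1 else 0) := by
    intro p r
    simp only [hP]
    by_cases h : G.Adj p r
    · have := hT.dist_eq_dist_add_one_of_adj q h
      have h' := h.symm
      simp only [h, h', true_and, if_true]
      split_ifs <;> omega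
    · have h' : ¬ G.Adj r p := fun h' => h h'.symm
      simp [h, h']
  have hdeg : ∀ p : V, G.degree p * G.dist q p = ∑ r : V, if G.Adj p r then G.dist q p else 0 := by
    intro p
    rw [← Finset.sum_filter, Finset.sum_const, smul_eq_mul, ← G.neighborFinset_eq_filter,
      G.card_neighborFinset_eq_degree]
  have hsum : ∑ p : V, G.degree p * G.dist q p =
      ∑ p : V, ((if p = q then 0 else G.dist q p) + (if p = q then 0 else G.dist q p - 1)) := by
    simp only [hdeg, hsplit, Finset.sum_add_distrib]
    congr 1
    · simp only [hparent]
    · rw [Finset.sum_comm]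
      simp only [hparent]
  have hcard : Fintype.card V - 1 = ∑ p : V, if p = q then 0 else 1 := by
    rw [← Finset.add_sum_erase _ _ (Finset.mem_univ q), if_pos rfl, zero_add,
      Finset.sum_congr rfl fun p hp => if_neg (Finset.ne_of_mem_erase hp)]
    simp [Finset.card_erase_of_mem]
  rw [hsum, hcard, ← Finset.sum_add_distrib, Finset.mul_sum]
  refine Finset.sum_congr rfl fun p _ => ?_
  split_ifs with h
  · simp [h]
  · have := hT.connected.pos_dist_of_ne (Ne.symm h)
    omega

theorem even_sum_dist {V : Type*} [Fintype V] (G : SimpleGraph V) :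
    2 ∣ ∑ p : V, ∑ q : V, G.dist p q := by
  rw [← ZMod.natCast_eq_zero_iff, ← Fintype.sum_prod_type', Nat.cast_sum]
  -- The off-diagonal terms cancel in pairs under `(p, q) ↦ (q, p)`.
  refine Finset.sum_involution (fun a _ => a.swap) ?_ ?_ (by simp) (by simp)
  · rintro ⟨p, q⟩ _
    simp only [Prod.fst_swap, Prod.snd_swap, G.dist_comm (u := q)]
    exact CharTwo.add_self_eq_zero _
  · rintro ⟨p, q⟩ _ h he
    obtain rfl : q = p := congrArg Prod.fst he
    simp at h

/-- For a tree `T` on `v` vertices with each edge of length 1,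
`8 W(T) = 2(2v-1)(v-1) + ∑_{p,q} deg(p) deg(q) d(p,q)` (ordered pairs). -/
theorem eight_mul_wienerIndex_tree {V : Type*} [Fintype V]
    (G : SimpleGraph V) [DecidableRel G.Adj] (hT : G.IsTree) :
    8 * wienerIndex G =
      2 * (2 * Fintype.card V - 1) * (Fintype.card V - 1) +
        ∑ p : V, ∑ q : V, G.degree p * G.degree q * G.dist p q := by
  classical
  have hW : 2 * wienerIndex G = ∑ p : V, ∑ q : V, G.dist p q :=
    Nat.mul_div_cancel' (even_sum_dist G)
  have hE : ∑ p : V, G.degree p = 2 * (Fintype.card V - 1) := by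
    have := hT.card_edgeFinset
    rw [G.sum_degrees_eq_twice_card_edges]
    omega
  have hv : 0 < Fintype.card V := Fintype.card_pos_iff.mpr hT.connected.nonempty
  have key := sum_degree_mul_dist_add G hT
  obtain ⟨n, hn⟩ : ∃ n, Fintype.card V = n + 1 := ⟨Fintype.card V - 1, by omega⟩
  simp only [hn, Nat.add_sub_cancel] at key hE ⊢
  -- Summing the rows gives `δᵀ D 1`; pairing them with `δ` gives `δᵀ D δ`.
  have h1 : ∑ p : V, ∑ q : V, G.degree q * G.dist p q + (n + 1) * n =
      2 * ∑ p : V, ∑ q : V, G.dist p q := by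
    rw [Finset.mul_sum, ← Finset.sum_congr rfl fun p _ => key p, Finset.sum_add_distrib]
    simp [hn]
  have h2 : ∑ p : V, ∑ q : V, G.degree p * G.degree q * G.dist p q + 2 * n * n =
      2 * ∑ p : V, G.degree p * ∑ q : V, G.dist p q := by
    have : ∀ p : V, 2 * (G.degree p * ∑ q : V, G.dist p q) =
        ∑ q : V, G.degree p * G.degree q * G.dist p q + G.degree p * n := by
      intro p
      rw [mul_left_comm, ← key p, mul_add, Finset.mul_sum]
      simp only [mul_assoc]
    rw [Finset.mul_sum, Finset.sum_congr rfl fun p _ => this p, Finset.sum_add_distrib,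
      ← Finset.sum_mul, hE]
  have h3 : ∑ p : V, ∑ q : V, G.degree q * G.dist p q =
      ∑ p : V, G.degree p * ∑ q : V, G.dist p q := by
    rw [Finset.sum_comm]
    refine Finset.sum_congr rfl fun p _ => ?_
    rw [Finset.mul_sum]
    simp only [G.dist_comm (u := p)]
  have h4 : 2 * (n + 1) - 1 = 2 * n + 1 := by omega
  rw [h4]
  linarith
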